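/- Let κ : [0,∞) → [1,∞) be a monotone increasing concave function with κ(t)/t → 0 as t → ∞. For any D₀ > 0, there exist constants D₁, D₂ > 0 depending only on D₀ and κ such that for all points x, y in a metric space X with basepoint o: if d(x,y) ≤ D₀·κ(d(o,x)), then D₁·κ(d(o,x)) ≤ κ(d(o,y)) ≤ D₂·κ(d(o,x)). -/

import Mathlib

open Filter

/-!
A concave function `κ` on `[0, ∞)` with `0 ≤ κ 0` satisfies `c κ(t) ≤ κ(c t)` for `c ∈ [0, 1]`;
hence it is subadditive, and `κ(c t) ≤ c κ(t)` for `1 ≤ c`. Write `a = d(o, x)` and `b = d(o, y)`.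

* Since `b ≤ a + D₀ κ(a)`, subadditivity bounds `κ(b)` by `κ(a) + κ(D₀ κ(a))`, and the last term is
  at most linear in `κ(a)`.
* If `a` is large, then `D₀ κ(a) ≤ c a` for a fixed `c < 1`, by sublinearity, so that
  `b ≥ (1 - c) a` and `κ(b) ≥ (1 - c) κ(a)`. Otherwise `κ(a)` is bounded and `κ(b) ≥ κ(0) > 0`.
-/

section Concave

variable {𝕜 E β : Type*} [AddCommMonoid β] [PartialOrder β] [IsOrderedAddMonoid β]

theorem smul_map_le_map_smul_of_concaveOn [Ring 𝕜] [PartialOrder 𝕜] [IsOrderedRing 𝕜]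
    [AddCommMonoid E] [Module 𝕜 E] [Module 𝕜 β] [PosSMulMono 𝕜 β] {s : Set E} {f : E → β}
    (hf : ConcaveOn 𝕜 s f) (hs : 0 ∈ s) (h0 : 0 ≤ f 0) {c : 𝕜} (hc0 : 0 ≤ c) (hc1 : c ≤ 1)
    {x : E} (hx : x ∈ s) : c • f x ≤ f (c • x) := by
  have hc1' : 0 ≤ 1 - c := sub_nonneg.2 hc1
  calc
    c • f x ≤ c • f x + (1 - c) • f 0 := le_add_of_nonneg_right (smul_nonneg hc1' h0)
    _ ≤ f (c • x + (1 - c) • 0) := hf.2 hx hs hc0 hc1' (add_sub_cancel c 1)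
    _ = f (c • x) := by rw [smul_zero, add_zero]

variable [Field 𝕜] [LinearOrder 𝕜] [IsStrictOrderedRing 𝕜] [Module 𝕜 β] [PosSMulMono 𝕜 β]

theorem map_smul_le_smul_map_of_concaveOn [AddCommMonoid E] [Module 𝕜 E] {s : Set E} {f : E → β}
    (hf : ConcaveOn 𝕜 s f) (hs : 0 ∈ s) (h0 : 0 ≤ f 0) {c : 𝕜} (hc : 1 ≤ c) {x : E}
    (hx : c • x ∈ s) : f (c • x) ≤ c • f x := by
  have hc0 : 0 < c := zero_lt_one.trans_le hc
  have h : c⁻¹ • f (c • x) ≤ f (c⁻¹ • c • x) :=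
    smul_map_le_map_smul_of_concaveOn hf hs h0 (inv_nonneg.2 hc0.le) (inv_le_one_of_one_le₀ hc) hx
  rw [inv_smul_smul₀ hc0.ne'] at h
  exact (inv_smul_le_iff_of_pos hc0).1 h

theorem map_add_le_of_concaveOn {s : Set 𝕜} {f : 𝕜 → β} (hf : ConcaveOn 𝕜 s f) (hs : 0 ∈ s)
    (h0 : 0 ≤ f 0) {x y : 𝕜} (hx : 0 ≤ x) (hy : 0 ≤ y) (hxy : x + y ∈ s) :
    f (x + y) ≤ f x + f y := by
  rcases (add_nonneg hx hy).eq_or_lt with hsum | hsum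
  · obtain ⟨rfl, rfl⟩ := (add_eq_zero_iff_of_nonneg hx hy).1 hsum.symm
    simpa only [add_zero] using le_add_of_nonneg_left h0
  have fraction_le {z : 𝕜} (hz : 0 ≤ z) (hzle : z ≤ x + y) :
      (z / (x + y)) • f (x + y) ≤ f z := by
    have h := smul_map_le_map_smul_of_concaveOn hf hs h0 (div_nonneg hz hsum.le)
      ((div_le_one hsum).2 hzle) hxy
    rwa [smul_eq_mul, div_mul_cancel₀ z hsum.ne'] at h
  calc
    f (x + y) = (x / (x + y)) • f (x + y) + (y / (x + y)) • f (x + y) := by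
      rw [← add_smul, ← add_div, div_self hsum.ne', one_smul]
    _ ≤ f x + f y :=
      add_le_add (fraction_le hx (le_add_of_nonneg_right hy))
        (fraction_le hy (le_add_of_nonneg_left hx))

end Concave

section Perturbation

variable {𝕜 : Type*} [Field 𝕜] [LinearOrder 𝕜] [IsStrictOrderedRing 𝕜] {κ : 𝕜 → 𝕜}

theorem map_add_mul_map_le_of_concaveOn (hmono : MonotoneOn κ (Set.Ici 0))
    (hconc : ConcaveOn 𝕜 (Set.Ici 0) κ) (hpos : 0 < κ 0) {D a : 𝕜} (hD : 0 ≤ D) (ha : 0 ≤ a) :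
    κ (a + D * κ a) ≤ (1 + κ (D * κ 0) / κ 0) * κ a := by
  have hκ : κ 0 ≤ κ a := hmono Set.self_mem_Ici ha ha
  have hDκ : 0 ≤ D * κ a := mul_nonneg hD (hpos.le.trans hκ)
  have hscale : (κ a / κ 0) • (D * κ 0) = D * κ a := by
    rw [smul_eq_mul]
    field_simp
  calc
    κ (a + D * κ a) ≤ κ a + κ (D * κ a) :=
      map_add_le_of_concaveOn hconc Set.self_mem_Ici hpos.le ha hDκ (add_nonneg ha hDκ)
    _ = κ a + κ ((κ a / κ 0) • (D * κ 0)) := by rw [hscale]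
    _ ≤ κ a + (κ a / κ 0) • κ (D * κ 0) := by
      gcongr
      exact map_smul_le_smul_map_of_concaveOn hconc Set.self_mem_Ici hpos.le
        ((one_le_div hpos).2 hκ) (hscale ▸ hDκ)
    _ = (1 + κ (D * κ 0) / κ 0) * κ a := by
      rw [smul_eq_mul]
      ring

theorem exists_pos_forall_mul_map_le_map_of_concaveOn (hmono : MonotoneOn κ (Set.Ici 0))
    (hconc : ConcaveOn 𝕜 (Set.Ici 0) κ) (hpos : 0 < κ 0) {c D : 𝕜} (hc0 : 0 ≤ c) (hc1 : c < 1)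
    (hlin : ∀ᶠ t in atTop, D * κ t ≤ c * t) :
    ∃ D₁ > 0, ∀ a b, 0 ≤ a → 0 ≤ b → a ≤ b + D * κ a → D₁ * κ a ≤ κ b := by
  obtain ⟨T, hT⟩ := (hlin.and (eventually_ge_atTop 0)).exists_forall_of_atTop
  have hT0 : 0 ≤ T := (hT T le_rfl).2
  have hκ {t : 𝕜} (ht : 0 ≤ t) : κ 0 ≤ κ t := hmono Set.self_mem_Ici ht ht
  have hκT : 0 < κ T := hpos.trans_le (hκ hT0)
  refine ⟨min (1 - c) (κ 0 / κ T), lt_min (sub_pos.2 hc1) (div_pos hpos hκT),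
    fun a b ha hb hab => ?_⟩
  have hκa : 0 ≤ κ a := hpos.le.trans (hκ ha)
  rcases le_total T a with hTa | haT
  · have hba : (1 - c) * a ≤ b := by linarith [(hT a hTa).1]
    calc
      min (1 - c) (κ 0 / κ T) * κ a ≤ (1 - c) * κ a := by gcongr; exact min_le_left _ _
      _ ≤ κ ((1 - c) * a) := smul_map_le_map_smul_of_concaveOn hconc Set.self_mem_Ici hpos.le
        (sub_nonneg.2 hc1.le) (sub_le_self 1 hc0) ha
      _ ≤ κ b := hmono (mul_nonneg (sub_nonneg.2 hc1.le) ha) hb hba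
  · calc
      min (1 - c) (κ 0 / κ T) * κ a ≤ κ 0 / κ T * κ T := by
        gcongr
        · exact min_le_right _ _
        · exact hmono ha hT0 haT
      _ = κ 0 := div_mul_cancel₀ _ hκT.ne'
      _ ≤ κ b := hκ hb

theorem eventually_mul_le_mul_of_tendsto_div_zero [TopologicalSpace 𝕜] [OrderTopology 𝕜]
    (hsub : Tendsto (fun t => κ t / t) atTop (nhds 0)) {c D : 𝕜} (hc : 0 < c) (hD : 0 < D) :
    ∀ᶠ t in atTop, D * κ t ≤ c * t := by
  filter_upwards [hsub.eventually_lt_const (div_pos hc hD), eventually_gt_atTop 0] with t hlt ht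
  rw [div_lt_div_iff₀ ht hD] at hlt
  simpa only [mul_comm D] using hlt.le

end Perturbation

theorem stmt0_general {κ : ℝ → ℝ} (hmono : MonotoneOn κ (Set.Ici 0))
    (hconc : ConcaveOn ℝ (Set.Ici 0) κ) (hpos : 0 < κ 0) {c D₀ : ℝ} (hD₀ : 0 ≤ D₀)
    (hc0 : 0 ≤ c) (hc1 : c < 1) (hlin : ∀ᶠ t in atTop, D₀ * κ t ≤ c * t) :
    ∃ D₁ > 0, ∃ D₂ > 0, ∀ (X : Type*) [PseudoMetricSpace X] (o x y : X),
      dist x y ≤ D₀ * κ (dist o x) →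
      D₁ * κ (dist o x) ≤ κ (dist o y) ∧ κ (dist o y) ≤ D₂ * κ (dist o x) := by
  obtain ⟨D₁, hD₁, hlower⟩ :=
    exists_pos_forall_mul_map_le_map_of_concaveOn hmono hconc hpos hc0 hc1 hlin
  have hκD₀ : 0 < κ (D₀ * κ 0) :=
    have h : 0 ≤ D₀ * κ 0 := mul_nonneg hD₀ hpos.le
    hpos.trans_le (hmono Set.self_mem_Ici h h)
  refine ⟨D₁, hD₁, 1 + κ (D₀ * κ 0) / κ 0, by positivity, fun X _ o x y hxy => ⟨?_, ?_⟩⟩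
  · have hox : dist o x ≤ dist o y + D₀ * κ (dist o x) := by
      linarith [dist_triangle_right o x y]
    exact hlower _ _ dist_nonneg dist_nonneg hox
  · have hoy : dist o y ≤ dist o x + D₀ * κ (dist o x) := by
      linarith [dist_triangle o x y]
    calc
      κ (dist o y) ≤ κ (dist o x + D₀ * κ (dist o x)) :=
        hmono dist_nonneg (dist_nonneg.trans hoy) hoy
      _ ≤ (1 + κ (D₀ * κ 0) / κ 0) * κ (dist o x) :=
        map_add_mul_map_le_of_concaveOn hmono hconc hpos hD₀ dist_nonneg

/-- Lemma 3.2 of Qing–Rafi–Tiozzo: for a sublinear function κ (monotone increasing,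
concave, κ ≥ 1, κ(t)/t → 0) and any D₀ > 0 there are D₁, D₂ > 0 depending only on
D₀ and κ such that in any metric space with basepoint o, if d(x,y) ≤ D₀·κ(d(o,x))
then D₁·κ(d(o,x)) ≤ κ(d(o,y)) ≤ D₂·κ(d(o,x)). -/
theorem stmt0 (κ : ℝ → ℝ)
    (hmono : MonotoneOn κ (Set.Ici 0))
    (hconc : ConcaveOn ℝ (Set.Ici 0) κ)
    (hge : ∀ t, 0 ≤ t → 1 ≤ κ t)
    (hsub : Tendsto (fun t => κ t / t) atTop (nhds 0))
    (D₀ : ℝ) (hD₀ : 0 < D₀) :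
    ∃ D₁ > (0:ℝ), ∃ D₂ > (0:ℝ), ∀ (X : Type) [MetricSpace X] (o x y : X),
      dist x y ≤ D₀ * κ (dist o x) →
      D₁ * κ (dist o x) ≤ κ (dist o y) ∧ κ (dist o y) ≤ D₂ * κ (dist o x) := by
  obtain ⟨D₁, hD₁, D₂, hD₂, h⟩ := stmt0_general hmono hconc (one_pos.trans_le (hge 0 le_rfl))
    hD₀.le one_half_pos.le one_half_lt_one
    (eventually_mul_le_mul_of_tendsto_div_zero hsub one_half_pos hD₀)
  exact ⟨D₁, hD₁, D₂, hD₂, fun X _ => h X⟩
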